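/- Let n ≥ 3, let 2 < s < n, and let μ be a nonzero finite Borel measure on ℝⁿ with compact support such that I_s(μ) < ∞. Then the set of unit vectors e ∈ S^{n−1} for which 0 lies in the interior of π_e(spt μ) ⊆ ℝ has positive (n−1)-dimensional Hausdorff measure in S^{n−1}. -/

import Mathlib

open MeasureTheory Metric Set
open scoped ENNReal RealInnerProductSpace

/-- The topological support of a measure: points all of whose neighbourhoods
have positive measure. -/
def sptm (n : ℕ) (μ : MeasureTheory.Measure (EuclideanSpace ℝ (Fin n))) :
    Set (EuclideanSpace ℝ (Fin n)) :=
  {x | ∀ r > 0, 0 < μ (Metric.ball x r)}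

/-- The `s`-energy `I_s(μ) = ∬ |x-y|^{-s} dμ(x) dμ(y)` of a measure. -/
noncomputable def energyI (n : ℕ) (s : ℝ)
    (μ : MeasureTheory.Measure (EuclideanSpace ℝ (Fin n))) : ℝ≥0∞ :=
  ∫⁻ x, ∫⁻ y, (‖x - y‖₊ : ℝ≥0∞) ^ (-s) ∂μ ∂μ

/-!
Choose the direction `θ` at random with Gaussian law `γ`, and write `φ` for the characteristic
function of `μ`. As `‖φ‖ ^ 2` is the characteristic function of the autocorrelation of `μ`,
averaging over `θ` gives `∬ |t| ^ (s - 1) * ‖φ (t • θ)‖ ^ 2 dt dγ(θ) = C * I_s(μ)`. Since `s > 2`,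
AM-GM against the integrable weight `(1 + |t|) ^ (1 - s)` shows that `(θ, t) ↦ φ (t • θ)` is
integrable. Hence for `γ`-almost every `θ` the image of `μ` under `⟪·, θ⟫` has a continuous
density, whose value at `0` is `(2 * π)⁻¹ * ∫ φ (t • θ) dt`. By Fubini, the average over `θ` of
`∫ φ (t • θ) dt` is `∬ exp (-‖t • x‖ ^ 2 / 2) dμ(x) dt > 0`, so with positive probability this
density does not vanish at `0`, and then `0` is interior to the support of the projected measure.
This property of `θ` only depends on `θ / ‖θ‖`, and a cone over a null set of the sphere is
Lebesgue, hence Gaussian, null.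
-/

open ProbabilityTheory Filter Topology Module
open scoped NNReal FourierTransform SchwartzMap Pointwise

section Gaussian

variable {E : Type*} [NormedAddCommGroup E] [InnerProductSpace ℝ E] [FiniteDimensional ℝ E]
  [MeasurableSpace E] [BorelSpace E]

lemma integrable_exp_neg_sq_norm_div_two : Integrable fun x : E ↦ Real.exp (-‖x‖ ^ 2 / 2) := by
  have h := (GaussianFourier.integrable_cexp_neg_mul_sq_norm_add (V := E) (b := 1 / 2)
    (by norm_num) 0 0).norm
  convert h using 2 with x
  have harg : -(1 / 2) * (‖x‖ : ℂ) ^ 2 + 0 * (⟪(0 : E), x⟫ : ℂ) = (-‖x‖ ^ 2 / 2 : ℝ) := by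
    push_cast
    ring
  rw [harg, Complex.norm_exp_ofReal]

lemma charFun_tilted_neg_sq_norm_div_two (t : E) :
    charFun (volume.tilted fun x : E ↦ -‖x‖ ^ 2 / 2) t = Complex.exp (-‖t‖ ^ 2 / 2) := by
  set Z : ℝ := ∫ x : E, Real.exp (-‖x‖ ^ 2 / 2) with hZ
  have hZ0 : (Z : ℂ) ≠ 0 :=
    Complex.ofReal_ne_zero.2 (integral_exp_pos integrable_exp_neg_sq_norm_div_two).ne'
  have hfourier (c : ℂ) (w : E) := GaussianFourier.integral_cexp_neg_mul_sq_norm_add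
    (b := 1 / 2) (by norm_num) c w
  have hZ_eq : (Z : ℂ) = (Real.pi / (1 / 2 : ℂ)) ^ (finrank ℝ E / 2 : ℂ) := by
    rw [hZ, ← integral_complex_ofReal]
    simpa [div_eq_inv_mul, neg_mul] using hfourier 0 0
  rw [charFun_apply, integral_tilted]
  calc ∫ x, (Real.exp (-‖x‖ ^ 2 / 2) / Z) • Complex.exp (⟪x, t⟫ * Complex.I)
      = ∫ x : E, (Z : ℂ)⁻¹ * Complex.exp (-(1 / 2) * ‖x‖ ^ 2 + Complex.I * ⟪t, x⟫) := by
        congr! 2 with x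
        rw [Complex.exp_add, real_inner_comm, Complex.real_smul]
        push_cast
        ring_nf
    _ = Complex.exp (-‖t‖ ^ 2 / 2) := by
        rw [integral_const_mul, hfourier, ← hZ_eq, inv_mul_cancel_left₀ hZ0, Complex.I_sq]
        ring_nf

lemma stdGaussian_eq_tilted :
    stdGaussian E = volume.tilted fun x : E ↦ -‖x‖ ^ 2 / 2 := by
  have := isProbabilityMeasure_tilted (integrable_exp_neg_sq_norm_div_two (E := E))
  refine Measure.ext_of_charFun (funext fun t ↦ ?_)
  rw [charFun_stdGaussian, charFun_tilted_neg_sq_norm_div_two]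

lemma stdGaussian_absolutelyContinuous : stdGaussian E ≪ volume :=
  stdGaussian_eq_tilted (E := E) ▸ tilted_absolutelyContinuous _ _

end Gaussian

section Autocorrelation

lemma lintegral_conv_map_neg {G : Type*} [AddGroup G] [MeasurableSpace G] [MeasurableAdd₂ G]
    [MeasurableNeg G] (μ : Measure G) [SFinite μ] {f : G → ℝ≥0∞} (hf : Measurable f) :
    ∫⁻ z, f z ∂(μ ∗ μ.map fun x ↦ -x) = ∫⁻ x, ∫⁻ y, f (x - y) ∂μ ∂μ := by
  rw [Measure.lintegral_conv hf]
  refine lintegral_congr fun x ↦ ?_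
  rw [lintegral_map (by fun_prop) measurable_neg]
  simp only [sub_eq_add_neg]

variable {E : Type*} [NormedAddCommGroup E] [InnerProductSpace ℝ E] [MeasurableSpace E]
  [BorelSpace E]

lemma charFun_conv_map_neg [SecondCountableTopology E] (μ : Measure E) [IsFiniteMeasure μ]
    (ξ : E) : charFun (μ ∗ μ.map fun x ↦ -x) ξ = (‖charFun μ ξ‖ ^ 2 : ℝ) := by
  have hneg : charFun (μ.map fun x ↦ -x) ξ = charFun μ (-ξ) := by
    simpa only [neg_smul, one_smul] using charFun_map_smul (μ := μ) (-1) ξ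
  rw [charFun_conv, hneg, charFun_neg, Complex.mul_conj, Complex.normSq_eq_norm_sq]

end Autocorrelation

section GaussianAverage

variable {E : Type*} [NormedAddCommGroup E] [InnerProductSpace ℝ E] [MeasurableSpace E]
  [BorelSpace E]

lemma integral_charFun_comm [SecondCountableTopology E] (μ ν : Measure E) [IsFiniteMeasure μ]
    [IsFiniteMeasure ν] : ∫ x, charFun μ x ∂ν = ∫ y, charFun ν y ∂μ := by
  simp only [charFun_apply]
  rw [integral_integral_swap]
  · simp only [real_inner_comm]
  · exact (integrable_const (1 : ℝ)).mono' (by fun_prop) (by simp [Function.uncurry])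

lemma integrable_exp_neg_sq_norm_smul_div_two (μ : Measure E) [IsFiniteMeasure μ] (t : ℝ) :
    Integrable (fun x ↦ Real.exp (-‖t • x‖ ^ 2 / 2)) μ := by
  have hmeas : Measurable fun x : E ↦ Real.exp (-‖t • x‖ ^ 2 / 2) := by fun_prop
  refine (integrable_const (1 : ℝ)).mono' hmeas.aestronglyMeasurable (.of_forall fun x ↦ ?_)
  rw [Real.norm_of_nonneg (by positivity), Real.exp_le_one_iff]
  linarith [sq_nonneg ‖t • x‖]

variable [FiniteDimensional ℝ E]

lemma integral_charFun_smul_stdGaussian (μ : Measure E) [IsFiniteMeasure μ] (t : ℝ) :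
    ∫ θ, charFun μ (t • θ) ∂stdGaussian E = (∫ x, Real.exp (-‖t • x‖ ^ 2 / 2) ∂μ : ℝ) := by
  calc ∫ θ, charFun μ (t • θ) ∂stdGaussian E
      = ∫ θ, charFun (μ.map (t • ·)) θ ∂stdGaussian E := by simp only [charFun_map_smul]
    _ = ∫ x, charFun (stdGaussian E) (t • x) ∂μ := by
        rw [integral_charFun_comm, integral_map (by fun_prop) (by fun_prop)]
    _ = (∫ x, Real.exp (-‖t • x‖ ^ 2 / 2) ∂μ : ℝ) := by
        rw [← integral_complex_ofReal]
        simp [charFun_stdGaussian]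

lemma lintegral_sq_norm_charFun_smul_stdGaussian (μ : Measure E) [IsFiniteMeasure μ] (t : ℝ) :
    ∫⁻ θ, ENNReal.ofReal (‖charFun μ (t • θ)‖ ^ 2) ∂stdGaussian E =
      ∫⁻ z, ENNReal.ofReal (Real.exp (-‖t • z‖ ^ 2 / 2)) ∂(μ ∗ μ.map fun x ↦ -x) := by
  have h := integral_charFun_smul_stdGaussian (μ ∗ μ.map fun x ↦ -x) t
  simp only [charFun_conv_map_neg, integral_complex_ofReal, Complex.ofReal_inj] at h
  have hint : Integrable (fun θ ↦ ‖charFun μ (t • θ)‖ ^ 2) (stdGaussian E) := by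
    refine (integrable_const (μ.real univ ^ 2)).mono' (by fun_prop) (.of_forall fun θ ↦ ?_)
    rw [Real.norm_of_nonneg (by positivity)]
    gcongr
    exact norm_charFun_le _
  rw [← ofReal_integral_eq_lintegral_ofReal hint (.of_forall fun _ ↦ by positivity), h,
    ofReal_integral_eq_lintegral_ofReal (integrable_exp_neg_sq_norm_smul_div_two _ t)
      (.of_forall fun _ ↦ by positivity)]

end GaussianAverage

section RieszKernel

lemma integrable_abs_rpow_mul_exp_neg_sq_div_two {p : ℝ} (hp : -1 < p) :
    Integrable fun t : ℝ ↦ |t| ^ p * Real.exp (-t ^ 2 / 2) := by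
  have h := integrable_rpow_mul_exp_neg_mul_sq one_half_pos hp
  refine (h.norm.add h.comp_neg.norm).mono' (by fun_prop) (.of_forall fun t ↦ ?_)
  have hexp : -t ^ 2 / 2 = -(1 / 2) * t ^ 2 := by ring
  rw [hexp, Real.norm_of_nonneg (by positivity)]
  rcases abs_choice t with ht | ht <;> rw [ht]
  · exact (le_abs_self _).trans (le_add_of_nonneg_right (norm_nonneg _))
  · rw [← neg_sq t]
    exact (le_abs_self _).trans (le_add_of_nonneg_left (norm_nonneg _))

lemma lintegral_comp_mul_left {a : ℝ} (ha : a ≠ 0) (f : ℝ → ℝ≥0∞) :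
    ∫⁻ t, f (a * t) = ENNReal.ofReal |a⁻¹| * ∫⁻ t, f t := by
  rw [← smul_eq_mul, ← lintegral_smul_measure, ← Real.map_volume_mul_left ha,
    (measurableEmbedding_mulLeft₀ ha).lintegral_map]

lemma lintegral_abs_rpow_mul_exp_neg_sq_norm_smul {E : Type*} [NormedAddCommGroup E]
    [NormedSpace ℝ E] {z : E} (hz : z ≠ 0) (s : ℝ) :
    ∫⁻ t : ℝ, ENNReal.ofReal (|t| ^ (s - 1) * Real.exp (-‖t • z‖ ^ 2 / 2)) =
      (∫⁻ t : ℝ, ENNReal.ofReal (|t| ^ (s - 1) * Real.exp (-t ^ 2 / 2))) * ‖z‖ₑ ^ (-s) := by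
  set f : ℝ → ℝ := fun t ↦ |t| ^ (s - 1) * Real.exp (-t ^ 2 / 2) with hf
  have hz' : 0 < ‖z‖ := norm_pos_iff.2 hz
  have hscale (t : ℝ) :
      |t| ^ (s - 1) * Real.exp (-‖t • z‖ ^ 2 / 2) = ‖z‖ ^ (1 - s) * f (‖z‖ * t) := by
    simp only [hf]
    rw [abs_mul, abs_norm, Real.mul_rpow hz'.le (abs_nonneg t), ← mul_assoc, ← mul_assoc,
      ← Real.rpow_add hz', norm_smul, mul_pow, mul_pow, Real.norm_eq_abs, sq_abs, mul_comm (t ^ 2)]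
    simp
  have hpow : ENNReal.ofReal (‖z‖ ^ (1 - s)) * ENNReal.ofReal |‖z‖⁻¹| = ‖z‖ₑ ^ (-s) := by
    rw [← ENNReal.ofReal_mul (by positivity), abs_of_pos (by positivity), ← Real.rpow_neg_one,
      ← Real.rpow_add hz', ← ofReal_norm, ENNReal.ofReal_rpow_of_pos hz']
    ring_nf
  simp_rw [hscale, ENNReal.ofReal_mul (Real.rpow_nonneg hz'.le _)]
  rw [lintegral_const_mul _ (by fun_prop),
    lintegral_comp_mul_left hz'.ne' fun t ↦ ENNReal.ofReal (f t), ← mul_assoc, hpow, mul_comm]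

end RieszKernel

section RieszEnergy

variable {E : Type*} [NormedAddCommGroup E] [MeasurableSpace E] {s : ℝ} {μ ν : Measure E}

/-- The Riesz `s`-energy `∬ ‖x - y‖⁻ˢ dμ(y) dμ(x)` of a measure on a normed group, with value in
`[0, ∞]`; for `s > 0` the kernel is `∞` on the diagonal. -/
noncomputable def rieszEnergy (s : ℝ) (μ : Measure E) : ℝ≥0∞ :=
  ∫⁻ x, ∫⁻ y, ‖x - y‖ₑ ^ (-s) ∂μ ∂μ

lemma rieszEnergy_mono (h : μ ≤ ν) : rieszEnergy s μ ≤ rieszEnergy s ν :=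
  lintegral_mono' h fun _ ↦ lintegral_mono' h le_rfl

lemma ediam_rpow_neg_mul_sq_le_rieszEnergy (hs : 0 ≤ s) (μ : Measure E) {B : Set E}
    (hB : MeasurableSet B) : ediam B ^ (-s) * μ B ^ 2 ≤ rieszEnergy s μ := by
  calc ediam B ^ (-s) * μ B ^ 2 = ∫⁻ _ in B, ∫⁻ _ in B, ediam B ^ (-s) ∂μ ∂μ := by
        simp only [lintegral_const, Measure.restrict_apply_univ]
        ring
    _ ≤ ∫⁻ x in B, ∫⁻ y in B, ‖x - y‖ₑ ^ (-s) ∂μ ∂μ :=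
        setLIntegral_mono' hB fun x hx ↦ setLIntegral_mono' hB fun y hy ↦ by
          rw [ENNReal.rpow_neg, ENNReal.rpow_neg, ← edist_eq_enorm_sub]
          gcongr
          exact edist_le_ediam_of_mem hx hy
    _ ≤ rieszEnergy s μ := rieszEnergy_mono Measure.restrict_le_self

lemma measure_lt_top_of_rieszEnergy_lt_top (hs : 0 ≤ s) (hμ : rieszEnergy s μ < ∞) {B : Set E}
    (hB : MeasurableSet B) (hBb : Bornology.IsBounded B) : μ B < ∞ := by
  have hd : ediam B ^ (-s) ≠ 0 := by
    simp [ENNReal.rpow_neg, hBb.ediam_ne_top, hs]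
  have h := (ediam_rpow_neg_mul_sq_le_rieszEnergy hs μ hB).trans_lt hμ
  by_contra! htop
  rw [top_le_iff.1 htop] at h
  simp [hd] at h

end RieszEnergy

section CharFunAlongLines

lemma le_two_rpow_mul_abs_rpow_mul_sq_add {p M x : ℝ} (hp : 0 ≤ p) (hx0 : 0 ≤ x) (hxM : x ≤ M)
    (t : ℝ) :
    x ≤ 2 ^ p * (|t| ^ p * x ^ 2) + (1 + 2 ^ p * M) * (1 + |t|) ^ (-p) := by
  set v : ℝ := (1 + |t|) ^ p with hv
  have hv0 : 0 < v := by positivity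
  have hM : 0 ≤ M := hx0.trans hxM
  rw [Real.rpow_neg (by positivity), ← hv]
  rcases le_total |t| 1 with ht | ht
  · have hv2 : v ≤ 2 ^ p := Real.rpow_le_rpow (by positivity) (by linarith) hp
    have hone : 1 ≤ 2 ^ p * v⁻¹ := by rwa [← div_eq_mul_inv, one_le_div hv0]
    calc x ≤ M * (2 ^ p * v⁻¹) := hxM.trans (le_mul_of_one_le_right hM hone)
      _ ≤ 2 ^ p * (|t| ^ p * x ^ 2) + v⁻¹ + M * (2 ^ p * v⁻¹) :=
          le_add_of_nonneg_left (by positivity)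
      _ = 2 ^ p * (|t| ^ p * x ^ 2) + (1 + 2 ^ p * M) * v⁻¹ := by ring
  · have hv2 : v ≤ 2 ^ p * |t| ^ p := by
      rw [← Real.mul_rpow (by norm_num) (abs_nonneg t)]
      exact Real.rpow_le_rpow (by positivity) (by linarith) hp
    have hAMGM : x ≤ v * x ^ 2 + v⁻¹ := by
      have hsq : v * x ^ 2 + v⁻¹ - x = v⁻¹ * ((v * x - 1) ^ 2 + v * x) := by
        field_simp
        ring
      rw [← sub_nonneg, hsq]
      positivity
    calc x ≤ v * x ^ 2 + v⁻¹ := hAMGM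
      _ ≤ 2 ^ p * |t| ^ p * x ^ 2 + v⁻¹ + 2 ^ p * M * v⁻¹ := by
          refine le_add_of_le_of_nonneg ?_ (by positivity)
          gcongr
      _ = 2 ^ p * (|t| ^ p * x ^ 2) + (1 + 2 ^ p * M) * v⁻¹ := by ring

variable {E : Type*} [NormedAddCommGroup E] [InnerProductSpace ℝ E] [FiniteDimensional ℝ E]
  [MeasurableSpace E] [BorelSpace E] {s : ℝ} {μ : Measure E} [IsFiniteMeasure μ]

lemma integrable_abs_rpow_mul_sq_norm_charFun_smul (hs : 0 < s) (hμ : rieszEnergy s μ < ∞) :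
    Integrable (fun q : E × ℝ ↦ |q.2| ^ (s - 1) * ‖charFun μ (q.2 • q.1)‖ ^ 2)
      ((stdGaussian E).prod volume) := by
  set ρ : Measure E := μ ∗ μ.map fun x ↦ -x
  set C : ℝ≥0∞ := ∫⁻ t : ℝ, ENNReal.ofReal (|t| ^ (s - 1) * Real.exp (-t ^ 2 / 2))
  have hC : C < ∞ :=
    (integrable_abs_rpow_mul_exp_neg_sq_div_two (by linarith)).lintegral_lt_top
  have hρ : ∫⁻ z, ‖z‖ₑ ^ (-s) ∂ρ = rieszEnergy s μ := lintegral_conv_map_neg μ (by fun_prop)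
  have hρ0 : ∀ᵐ z ∂ρ, z ≠ 0 := by
    filter_upwards [ae_lt_top (by fun_prop) (hρ ▸ hμ.ne)] with z hz hz0
    simp [hz0, hs] at hz
  refine ⟨by fun_prop, ?_⟩
  rw [hasFiniteIntegral_iff_ofReal (.of_forall fun _ ↦ by positivity),
    lintegral_prod_symm _ (by fun_prop)]
  calc ∫⁻ t : ℝ, ∫⁻ θ, ENNReal.ofReal (|t| ^ (s - 1) * ‖charFun μ (t • θ)‖ ^ 2) ∂stdGaussian E
      = ∫⁻ t : ℝ, ∫⁻ z, ENNReal.ofReal (|t| ^ (s - 1) * Real.exp (-‖t • z‖ ^ 2 / 2)) ∂ρ := by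
        refine lintegral_congr fun t ↦ ?_
        simp_rw [ENNReal.ofReal_mul (Real.rpow_nonneg (abs_nonneg t) _)]
        rw [lintegral_const_mul _ (by fun_prop), lintegral_const_mul _ (by fun_prop),
          lintegral_sq_norm_charFun_smul_stdGaussian]
    _ = ∫⁻ z, C * ‖z‖ₑ ^ (-s) ∂ρ := by
        rw [lintegral_lintegral_swap (by fun_prop)]
        refine lintegral_congr_ae ?_
        filter_upwards [hρ0] with z hz using lintegral_abs_rpow_mul_exp_neg_sq_norm_smul hz s
    _ = C * rieszEnergy s μ := by rw [lintegral_const_mul _ (by fun_prop), hρ]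
    _ < ∞ := ENNReal.mul_lt_top hC hμ

lemma integrable_charFun_smul_stdGaussian_prod (hs : 2 < s) (hμ : rieszEnergy s μ < ∞) :
    Integrable (fun q : E × ℝ ↦ charFun μ (q.2 • q.1)) ((stdGaussian E).prod volume) := by
  have henergy := integrable_abs_rpow_mul_sq_norm_charFun_smul (by linarith) hμ
  have hweight : Integrable (fun q : E × ℝ ↦ (1 + ‖q.2‖) ^ (-(s - 1)))
      ((stdGaussian E).prod volume) := by
    refine (integrable_one_add_norm ?_).comp_snd _
    rw [finrank_self, Nat.cast_one]
    linarith
  refine ((henergy.const_mul (2 ^ (s - 1))).add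
    (hweight.const_mul (1 + 2 ^ (s - 1) * μ.real univ))).mono' (by fun_prop) (.of_forall fun q ↦ ?_)
  exact le_two_rpow_mul_abs_rpow_mul_sq_add (by linarith) (norm_nonneg _) (norm_charFun_le _) q.2

variable [NeZero μ]

lemma integral_integral_charFun_smul_stdGaussian_ne_zero (hs : 2 < s)
    (hμ : rieszEnergy s μ < ∞) :
    ∫ θ, (∫ t : ℝ, charFun μ (t • θ)) ∂stdGaussian E ≠ 0 := by
  have hint := integrable_charFun_smul_stdGaussian_prod hs hμ
  have hG : Integrable fun t : ℝ ↦ ∫ x, Real.exp (-‖t • x‖ ^ 2 / 2) ∂μ := by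
    simpa [integral_charFun_smul_stdGaussian] using hint.integral_prod_right.re
  have hG0 (t : ℝ) : 0 < ∫ x, Real.exp (-‖t • x‖ ^ 2 / 2) ∂μ :=
    integral_exp_pos (integrable_exp_neg_sq_norm_smul_div_two μ t)
  rw [integral_integral_swap hint]
  simp only [integral_charFun_smul_stdGaussian, integral_complex_ofReal]
  refine Complex.ofReal_ne_zero.2 (ne_of_gt ?_)
  rw [integral_pos_iff_support_of_nonneg (fun t ↦ (hG0 t).le) hG,
    Function.support_eq_univ fun t ↦ (hG0 t).ne']
  simp

lemma frequently_integrable_charFun_smul_and_integral_ne_zero (hs : 2 < s)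
    (hμ : rieszEnergy s μ < ∞) :
    ∃ᵐ θ ∂stdGaussian E, Integrable (fun t : ℝ ↦ charFun μ (t • θ)) ∧
      ∫ t : ℝ, charFun μ (t • θ) ≠ 0 := by
  have hne : ∃ᵐ θ ∂stdGaussian E, ∫ t : ℝ, charFun μ (t • θ) ≠ 0 := fun h ↦
    integral_integral_charFun_smul_stdGaussian_ne_zero hs hμ
      (integral_eq_zero_of_ae (h.mono fun θ hθ ↦ not_not.1 hθ))
  exact (hne.and_eventually (integrable_charFun_smul_stdGaussian_prod hs hμ).prod_right_ae).mono
    fun θ hθ ↦ hθ.symm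

end CharFunAlongLines

section CharFunDensity

variable {E : Type*} [NormedAddCommGroup E] [InnerProductSpace ℝ E] [FiniteDimensional ℝ E]
  [MeasurableSpace E] [BorelSpace E] {ν : Measure E}

lemma integral_fourier_eq_integral_mul_charFun (ν : Measure E) [IsFiniteMeasure ν] {f : E → ℂ}
    (hf : Integrable f) :
    ∫ x, 𝓕 f x ∂ν = ∫ w, f w * charFun ν (-(2 * Real.pi) • w) := by
  have h := VectorFourier.integral_fourierIntegral_smul_eq_flip (L := innerₗ E) (ν := ν)
    (g := (1 : E → ℂ)) Real.continuous_fourierChar (by exact continuous_inner) hf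
    (integrable_const 1)
  simp only [Pi.one_apply, smul_eq_mul, mul_one, flip_innerₗ] at h
  refine h.trans (integral_congr_ae (.of_forall fun w ↦ ?_))
  simp only [charFun_eq_fourierIntegral', smul_smul]
  congr 2
  rw [neg_mul_neg, inv_mul_cancel₀ (by positivity), one_smul]

/-- The function `x ↦ (2π)⁻ᵈ ∫ e^{-i⟪ξ, x⟫} charFun ν ξ dξ` on a `d`-dimensional space, which is the
density of `ν` with respect to Lebesgue measure when `charFun ν` is integrable. The dilation by `2π`
accounts for the normalisation of `𝓕`. -/
noncomputable def charFunDensity (ν : Measure E) : E → ℂ :=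
  𝓕 fun w ↦ charFun ν ((2 * Real.pi) • w)

lemma charFunDensity_zero_ne_zero (h0 : ∫ w, charFun ν w ≠ 0) : charFunDensity ν 0 ≠ 0 := by
  rw [charFunDensity, Real.fourier_eq]
  simp only [inner_zero_right, neg_zero, AddChar.map_zero_eq_one, one_smul,
    Measure.integral_comp_smul]
  exact smul_ne_zero (by positivity) h0

lemma continuous_charFunDensity (hν : Integrable (charFun ν)) : Continuous (charFunDensity ν) :=
  VectorFourier.fourierIntegral_continuous Real.continuous_fourierChar
    (by exact continuous_inner) (hν.comp_smul (by positivity))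

variable [IsFiniteMeasure ν]

lemma integral_eq_integral_mul_charFunDensity (hν : Integrable (charFun ν)) (f : 𝓢(E, ℂ)) :
    ∫ x, f x ∂ν = ∫ x, f x * charFunDensity ν x := by
  have hc : Integrable fun w ↦ charFun ν ((2 * Real.pi) • w) := hν.comp_smul (by positivity)
  calc ∫ x, f x ∂ν = ∫ x, 𝓕 ⇑(𝓕⁻ f : 𝓢(E, ℂ)) x ∂ν := by
        rw [← SchwartzMap.fourier_coe, FourierTransform.fourier_fourierInv_eq]
    _ = ∫ w, (𝓕⁻ f : 𝓢(E, ℂ)) w * charFun ν (-(2 * Real.pi) • w) :=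
        integral_fourier_eq_integral_mul_charFun ν (𝓕⁻ f).integrable
    _ = ∫ w, (𝓕 f : 𝓢(E, ℂ)) w * charFun ν ((2 * Real.pi) • w) := by
        rw [← integral_neg_eq_self]
        simp [SchwartzMap.fourierInv_coe, SchwartzMap.fourier_coe, Real.fourierInv_eq_fourier_neg]
    _ = ∫ x, f x * charFunDensity ν x := by
        simpa [flip_innerₗ] using!
          VectorFourier.integral_fourierIntegral_smul_eq_flip (L := innerₗ E) (μ := volume)
            (ν := volume) Real.continuous_fourierChar (by exact continuous_inner) f.integrable hc

lemma eqOn_zero_charFunDensity (hν : Integrable (charFun ν)) {U : Set E}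
    (hU : IsOpen U) (hνU : ν U = 0) : EqOn (charFunDensity ν) 0 U := by
  have hcont := continuous_charFunDensity hν
  refine Measure.eqOn_open_of_ae_eq (μ := volume) ?_ hU hcont.continuousOn continuousOn_const
  rw [EventuallyEq, ae_restrict_iff' hU.measurableSet]
  refine hU.ae_eq_zero_of_integral_contDiff_smul_eq_zero
    (hcont.locallyIntegrable.locallyIntegrableOn U) fun g hg hgc hgU ↦ ?_
  have hgc' : HasCompactSupport (Complex.ofRealCLM ∘ g) := hgc.comp_left rfl
  calc ∫ x, g x • charFunDensity ν x
      = ∫ x, hgc'.toSchwartzMap (by fun_prop) x ∂ν := by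
        rw [integral_eq_integral_mul_charFunDensity hν]
        simp
    _ = 0 := by
        refine integral_eq_zero_of_ae ?_
        filter_upwards [measure_eq_zero_iff_ae_notMem.1 hνU] with x hx
        simp [image_eq_zero_of_notMem_tsupport fun h ↦ hx (hgU h)]

lemma zero_mem_interior_support_of_integral_charFun_ne_zero (hν : Integrable (charFun ν))
    (h0 : ∫ w, charFun ν w ≠ 0) : 0 ∈ interior ν.support := by
  by_contra h
  rw [← mem_compl_iff, ← closure_compl] at h
  have hzero : EqOn (charFunDensity ν) 0 (closure ν.supportᶜ) :=
    (eqOn_zero_charFunDensity hν Measure.isOpen_compl_support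
      Measure.measure_compl_support).closure (continuous_charFunDensity hν) continuous_const
  exact charFunDensity_zero_ne_zero h0 (hzero h)

end CharFunDensity

section RadialProjection

variable {E : Type*} [NormedAddCommGroup E] [NormedSpace ℝ E]

lemma norm_normalize_le_one (x : E) : ‖NormedSpace.normalize x‖ ≤ 1 := by
  rcases eq_or_ne x 0 with rfl | hx
  · simp
  · exact (NormedSpace.norm_normalize_eq_one_iff.2 hx).le

lemma dist_smul_le_of_dist_normalize_le {R δ : ℝ} (hδ : 0 < δ) {x a : E} (hx : ‖x‖ ≤ R)
    (ha : ‖a‖ ≤ 1) (hxa : dist (NormedSpace.normalize x) a ≤ δ) :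
    dist x ((⌊‖x‖ / δ⌋₊ * δ) • a) ≤ (R + 1) * δ := by
  set k : ℝ := (⌊‖x‖ / δ⌋₊ : ℝ)
  have hk : |‖x‖ - k * δ| ≤ δ := by
    have hle : k * δ ≤ ‖x‖ := (le_div_iff₀ hδ).1 (Nat.floor_le (by positivity))
    have hlt : ‖x‖ < (k + 1) * δ := (div_lt_iff₀ hδ).1 (Nat.lt_floor_add_one _)
    rw [abs_le]
    constructor <;> linarith
  calc dist x ((k * δ) • a)
      = ‖‖x‖ • (NormedSpace.normalize x - a) + (‖x‖ - k * δ) • a‖ := by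
        rw [dist_eq_norm, smul_sub, NormedSpace.norm_smul_normalize, sub_smul]
        abel_nf
    _ ≤ ‖x‖ * dist (NormedSpace.normalize x) a + |‖x‖ - k * δ| * ‖a‖ := by
        refine (norm_add_le _ _).trans_eq ?_
        rw [norm_smul, norm_smul, norm_norm, dist_eq_norm, Real.norm_eq_abs]
    _ ≤ R * δ + δ * 1 := by
        gcongr
        exact (norm_nonneg x).trans hx
    _ = (R + 1) * δ := by ring

lemma exists_inter_preimage_normalize_subset_iUnion_closedBall {R : ℝ} {δ : ℝ≥0} (hδ : 0 < δ)
    {U : Set E} (hU : ediam U ≤ δ) :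
    ∃ a : E, closedBall 0 R ∩ NormedSpace.normalize ⁻¹' U ⊆
      ⋃ k ∈ Finset.range (⌊R / δ⌋₊ + 1), closedBall ((k * (δ : ℝ)) • a) ((R + 1) * δ) := by
  rcases (closedBall 0 R ∩ NormedSpace.normalize ⁻¹' U).eq_empty_or_nonempty with
    hempty | ⟨x₀, -, hx₀⟩
  · exact ⟨0, hempty ▸ empty_subset _⟩
  refine ⟨NormedSpace.normalize x₀, fun x ⟨hxR, hxU⟩ ↦ ?_⟩
  rw [mem_closedBall_zero_iff] at hxR
  have hdist : dist (NormedSpace.normalize x) (NormedSpace.normalize x₀) ≤ δ := by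
    rw [dist_nndist, NNReal.coe_le_coe, ← edist_le_coe]
    exact (edist_le_ediam_of_mem (s := U) hxU hx₀).trans hU
  refine mem_iUnion₂.2 ⟨⌊‖x‖ / δ⌋₊, ?_, dist_smul_le_of_dist_normalize_le (by exact_mod_cast hδ) hxR
    (norm_normalize_le_one x₀) hdist⟩
  rw [Finset.mem_range, Nat.lt_succ_iff]
  gcongr

variable [MeasurableSpace E] [BorelSpace E]

lemma measurable_normalize [SecondCountableTopology E] :
    Measurable (NormedSpace.normalize : E → E) := by
  unfold NormedSpace.normalize
  fun_prop

variable [FiniteDimensional ℝ E] (ν : Measure E) [ν.IsAddHaarMeasure]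

lemma measure_inter_preimage_normalize_le_of_ediam_le (R : ℝ≥0) {δ : ℝ≥0} (hδ : 0 < δ)
    (hδ1 : δ ≤ 1) {U : Set E} (hU : ediam U ≤ δ) :
    ν (closedBall 0 R ∩ NormedSpace.normalize ⁻¹' U) ≤
      (R + 1) ^ (finrank ℝ E + 1) * ν (ball 0 1) * δ ^ ((finrank ℝ E : ℝ) - 1) := by
  obtain ⟨a, ha⟩ := exists_inter_preimage_normalize_subset_iUnion_closedBall hδ hU
  have hcard : (⌊R / δ⌋₊ + 1 : ℝ≥0) ≤ (R + 1) * δ⁻¹ := by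
    calc (⌊R / δ⌋₊ + 1 : ℝ≥0) ≤ R / δ + δ⁻¹ :=
          add_le_add (Nat.floor_le (by positivity)) ((one_le_inv₀ hδ).2 hδ1)
      _ = (R + 1) * δ⁻¹ := by ring
  have hpow : δ⁻¹ * δ ^ finrank ℝ E = δ ^ ((finrank ℝ E : ℝ) - 1) := by
    rw [NNReal.rpow_sub hδ.ne', NNReal.rpow_one, NNReal.rpow_natCast]
    ring
  have hball (k : ℕ) : ν (closedBall ((k * (δ : ℝ)) • a) ((R + 1) * δ)) =
      (((R + 1) * δ) ^ finrank ℝ E : ℝ≥0) * ν (ball 0 1) := by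
    rw [Measure.addHaar_closedBall _ _ (by positivity)]
    congr 1
    exact ENNReal.ofReal_coe_nnreal (p := ((R + 1) * δ) ^ finrank ℝ E)
  calc ν _ ≤ ∑ k ∈ Finset.range (⌊R / δ⌋₊ + 1), ν (closedBall ((k * (δ : ℝ)) • a) ((R + 1) * δ)) :=
        (measure_mono ha).trans (measure_biUnion_finset_le _ _)
    _ = (⌊R / δ⌋₊ + 1 : ℝ≥0) * (((R + 1) * δ) ^ finrank ℝ E : ℝ≥0) * ν (ball 0 1) := by
        simp only [hball]
        simp [mul_assoc]
    _ ≤ ((R + 1) * δ⁻¹ : ℝ≥0) * (((R + 1) * δ) ^ finrank ℝ E : ℝ≥0) * ν (ball 0 1) := by gcongr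
    _ = ((R + 1) ^ (finrank ℝ E + 1) * δ ^ ((finrank ℝ E : ℝ) - 1) : ℝ≥0) * ν (ball 0 1) := by
        rw [← ENNReal.coe_mul, ← hpow, mul_pow]
        ring_nf
    _ = (R + 1) ^ (finrank ℝ E + 1) * ν (ball 0 1) * δ ^ ((finrank ℝ E : ℝ) - 1) := by
        rw [ENNReal.coe_mul, ← ENNReal.coe_rpow_of_ne_zero hδ.ne']
        push_cast
        ring

lemma measure_inter_preimage_normalize_le (R : ℝ≥0) {U : Set E} (hU : ediam U < 1) :
    ν (closedBall 0 R ∩ NormedSpace.normalize ⁻¹' U) ≤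
      (R + 1) ^ (finrank ℝ E + 1) * ν (ball 0 1) * ediam U ^ ((finrank ℝ E : ℝ) - 1) := by
  set C : ℝ≥0∞ := (R + 1) ^ (finrank ℝ E + 1) * ν (ball 0 1)
  have hC : C ≠ ∞ := ENNReal.mul_ne_top (by finiteness) measure_ball_lt_top.ne
  have hlim : Tendsto (fun δ ↦ C * δ ^ ((finrank ℝ E : ℝ) - 1)) (𝓝[>] ediam U)
      (𝓝 (C * ediam U ^ ((finrank ℝ E : ℝ) - 1))) :=
    ENNReal.Tendsto.const_mul
      (ENNReal.continuous_rpow_const.continuousAt.mono_left nhdsWithin_le_nhds) (.inr hC)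
  have : (𝓝[>] ediam U).NeBot := nhdsGT_neBot_of_exists_gt ⟨1, hU⟩
  refine ge_of_tendsto hlim ?_
  filter_upwards [Ioo_mem_nhdsGT hU] with δ ⟨hUδ, hδ1⟩
  lift δ to ℝ≥0 using hδ1.ne_top
  exact measure_inter_preimage_normalize_le_of_ediam_le ν R (ENNReal.coe_pos.1 (pos_of_gt hUδ))
    (by exact_mod_cast hδ1.le) hUδ.le

lemma map_normalize_restrict_closedBall_absolutelyContinuous (R : ℝ≥0) :
    (ν.restrict (closedBall 0 R)).map NormedSpace.normalize ≪ μH[(finrank ℝ E : ℝ) - 1] := by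
  set C : ℝ≥0∞ := (R + 1) ^ (finrank ℝ E + 1) * ν (ball 0 1)
  have hC : C ≠ ∞ := ENNReal.mul_ne_top (by finiteness) measure_ball_lt_top.ne
  have hC0 : C ≠ 0 := mul_ne_zero (by positivity) (measure_ball_pos ν 0 one_pos).ne'
  have hle : C⁻¹ • (ν.restrict (closedBall 0 R)).map NormedSpace.normalize ≤
      μH[(finrank ℝ E : ℝ) - 1] := by
    refine Measure.le_hausdorffMeasure _ _ 2⁻¹ (by simp) fun U hU ↦ ?_
    have hUm : MeasurableSet (closure U) := isClosed_closure.measurableSet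
    calc (C⁻¹ • (ν.restrict (closedBall 0 R)).map NormedSpace.normalize) U
        ≤ C⁻¹ * (ν.restrict (closedBall 0 R)).map NormedSpace.normalize (closure U) := by
          rw [Measure.smul_apply, smul_eq_mul]
          gcongr
          exact subset_closure
      _ = C⁻¹ * ν (closedBall 0 R ∩ NormedSpace.normalize ⁻¹' closure U) := by
          rw [Measure.map_apply measurable_normalize hUm,
            Measure.restrict_apply (measurable_normalize hUm), inter_comm]
      _ ≤ C⁻¹ * (C * ediam (closure U) ^ ((finrank ℝ E : ℝ) - 1)) := by
          gcongr
          refine measure_inter_preimage_normalize_le ν R ?_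
          exact ediam_closure U ▸ hU.trans_lt (by simp)
      _ = ediam U ^ ((finrank ℝ E : ℝ) - 1) := by
          rw [← mul_assoc, ENNReal.inv_mul_cancel hC0 hC, one_mul, ediam_closure]
  exact (Measure.absolutelyContinuous_smul (ENNReal.inv_ne_zero.2 hC)).trans
    hle.absolutelyContinuous

lemma quasiMeasurePreserving_normalize :
    Measure.QuasiMeasurePreserving (NormedSpace.normalize : E → E) ν
      μH[(finrank ℝ E : ℝ) - 1] := by
  refine ⟨measurable_normalize, .mk fun A hA hA0 ↦ ?_⟩
  rw [Measure.map_apply measurable_normalize hA]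
  have hzero (R : ℕ) : ν (closedBall 0 R ∩ NormedSpace.normalize ⁻¹' A) = 0 := by
    have h := map_normalize_restrict_closedBall_absolutelyContinuous ν R hA0
    rwa [Measure.map_apply measurable_normalize hA,
      Measure.restrict_apply (measurable_normalize hA), inter_comm] at h
  refine measure_mono_null (fun x hx ↦ mem_iUnion.2 ?_) (measure_iUnion_null hzero)
  obtain ⟨R, hR⟩ := exists_nat_ge ‖x‖
  exact ⟨R, mem_closedBall_zero_iff.2 hR, hx⟩

end RadialProjection

section Projections

variable {E : Type*} [NormedAddCommGroup E] [InnerProductSpace ℝ E]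

lemma zero_mem_interior_image_inner_normalize {θ : E} {S : Set E}
    (h : (0 : ℝ) ∈ interior ((fun x ↦ ⟪x, θ⟫) '' S)) :
    ‖NormedSpace.normalize θ‖ = 1 ∧
      (0 : ℝ) ∈ interior ((fun x ↦ ⟪x, NormedSpace.normalize θ⟫) '' S) := by
  have hθ : θ ≠ 0 := by
    rintro rfl
    have := interior_mono (show (fun x : E ↦ ⟪x, 0⟫) '' S ⊆ {0} by simp) h
    simp at this
  refine ⟨NormedSpace.norm_normalize_eq_one_iff.2 hθ, ?_⟩
  have himage : (fun x ↦ ⟪x, NormedSpace.normalize θ⟫) '' S =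
      ‖θ‖⁻¹ • ((fun x ↦ ⟪x, θ⟫) '' S) := by
    rw [← image_smul, image_image]
    simp only [NormedSpace.normalize, inner_smul_right, smul_eq_mul]
  rw [himage, interior_smul₀ (inv_ne_zero (norm_ne_zero_iff.2 hθ))]
  exact ⟨0, h, smul_zero _⟩

variable [MeasurableSpace E] [BorelSpace E]

lemma charFun_map_inner (μ : Measure E) (θ : E) (t : ℝ) :
    charFun (μ.map fun x ↦ ⟪x, θ⟫) t = charFun μ (t • θ) := by
  rw [charFun_apply, charFun_apply, integral_map (by fun_prop) (by fun_prop)]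
  simp [inner_smul_right]

variable [FiniteDimensional ℝ E] {s : ℝ} {μ : Measure E}

lemma frequently_zero_mem_interior_image_inner [IsFiniteMeasure μ] [NeZero μ] (hs : 2 < s)
    (hμ : rieszEnergy s μ < ∞) {K : Set E} (hK : IsCompact K) (hμK : ∀ᵐ x ∂μ, x ∈ K) :
    ∃ᵐ θ ∂stdGaussian E, (0 : ℝ) ∈ interior ((fun x ↦ ⟪x, θ⟫) '' K) := by
  refine (frequently_integrable_charFun_smul_and_integral_ne_zero hs hμ).mono fun θ hθ ↦ ?_
  simp only [← charFun_map_inner] at hθ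
  have hclosed : IsClosed ((fun x ↦ ⟪x, θ⟫) '' K) := (hK.image (by fun_prop)).isClosed
  have hfull : (fun x ↦ ⟪x, θ⟫) '' K ∈ ae (μ.map fun x ↦ ⟪x, θ⟫) :=
    (ae_map_iff (by fun_prop) hclosed.measurableSet).2 (hμK.mono fun x hx ↦ mem_image_of_mem _ hx)
  exact interior_mono (Measure.support_subset_of_isClosed hclosed hfull)
    (zero_mem_interior_support_of_integral_charFun_ne_zero hθ.1 hθ.2)

lemma frequently_zero_mem_interior_image_inner_support (hs : 2 < s) (hμ : μ ≠ 0)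
    (hμs : rieszEnergy s μ < ∞) :
    ∃ᵐ θ ∂stdGaussian E, (0 : ℝ) ∈ interior ((fun x ↦ ⟪x, θ⟫) '' μ.support) := by
  obtain ⟨R, hR⟩ : ∃ R : ℕ, μ (closedBall 0 R) ≠ 0 := by
    by_contra! h
    exact hμ (Measure.measure_univ_eq_zero.1
      (iUnion_closedBall_nat (0 : E) ▸ measure_iUnion_null h))
  have : NeZero (μ.restrict (closedBall 0 R)) := ⟨Measure.restrict_eq_zero.not.2 hR⟩
  have : IsFiniteMeasure (μ.restrict (closedBall 0 R)) :=
    isFiniteMeasure_restrict.2 (measure_lt_top_of_rieszEnergy_lt_top (by linarith) hμs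
      measurableSet_closedBall isBounded_closedBall).ne
  have henergy : rieszEnergy s (μ.restrict (closedBall 0 R)) < ∞ :=
    (rieszEnergy_mono Measure.restrict_le_self).trans_lt hμs
  have hcompact : IsCompact (μ.support ∩ closedBall 0 R) :=
    (isCompact_closedBall 0 R).inter_left Measure.isClosed_support
  have hfull : ∀ᵐ x ∂μ.restrict (closedBall 0 R), x ∈ μ.support ∩ closedBall 0 R :=
    (ae_restrict_of_ae Measure.support_mem_ae).and (ae_restrict_mem measurableSet_closedBall)
  exact (frequently_zero_mem_interior_image_inner hs henergy hcompact hfull).mono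
    fun θ hθ ↦ interior_mono (image_mono inter_subset_left) hθ

lemma hausdorffMeasure_pos_of_frequently_normalize_mem {A : Set E}
    (h : ∃ᵐ θ ∂stdGaussian E, NormedSpace.normalize θ ∈ A) :
    0 < μH[(finrank ℝ E : ℝ) - 1] A := by
  refine pos_iff_ne_zero.2 fun hA ↦ h (stdGaussian_absolutelyContinuous.ae_le ?_)
  exact measure_eq_zero_iff_ae_notMem.1
    ((quasiMeasurePreserving_normalize volume).preimage_null hA)

theorem stmt_10_general (hs : 2 < s) (hμ : μ ≠ 0) (hμs : rieszEnergy s μ < ∞) :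
    0 < μH[(finrank ℝ E : ℝ) - 1]
      {e : E | ‖e‖ = 1 ∧ (0 : ℝ) ∈ interior ((fun x ↦ ⟪x, e⟫) '' μ.support)} :=
  hausdorffMeasure_pos_of_frequently_normalize_mem <|
    (frequently_zero_mem_interior_image_inner_support hs hμ hμs).mono fun _ ↦
      zero_mem_interior_image_inner_normalize

end Projections

lemma sptm_eq_support {n : ℕ} (μ : Measure (EuclideanSpace ℝ (Fin n))) :
    sptm n μ = μ.support :=
  Set.ext fun _ ↦ nhds_basis_ball.mem_measureSupport.symm

theorem stmt_10 (n : ℕ) (hn : 3 ≤ n) (s : ℝ) (hs2 : 2 < s) (hsn : s < n)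
    (μ : Measure (EuclideanSpace ℝ (Fin n)))
    [IsFiniteMeasure μ] (hμ0 : μ ≠ 0)
    (hμc : IsCompact (sptm n μ)) (hμe : energyI n s μ < ∞) :
    0 < μH[(n : ℝ) - 1]
      {e : EuclideanSpace ℝ (Fin n) | ‖e‖ = 1 ∧
        (0 : ℝ) ∈ interior ((fun x => ⟪x, e⟫) '' sptm n μ)} := by
  simpa only [finrank_euclideanSpace_fin, ← sptm_eq_support] using stmt_10_general hs2 hμ0 hμe
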